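/- Let n ≥ 2 and let Z ⊆ [n] be a nonempty set of even cardinality. Then there exist at least n − 2 distinct spanning trees T of the complete graph on the vertex set [n] such that the set of vertices of odd degree in T is exactly Z. -/

import Mathlib

open Finset symmDiff

/-- The vertex set `[n] = {1, …, n}`. -/
def rng (n : ℕ) : Finset ℕ := Finset.Icc 1 n

/-- The set of `d`-simplices (i.e. `(d+1)`-element subsets) on the vertex set `V`. -/
def simplices (V : Finset ℕ) (d : ℕ) : Finset (Finset ℕ) :=
  V.powerset.filter fun σ => σ.card = d + 1

/-- The mod-2 boundary of a set `X` of simplices: the set of faces `τ` of codimension one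
(`|τ| + 1 = |σ|`) contained in an odd number of members of `X`. -/
def bd (X : Finset (Finset ℕ)) : Finset (Finset ℕ) :=
  (X.biUnion fun σ => σ.powerset).filter
    fun τ => Odd (X.filter fun σ => τ ⊆ σ ∧ τ.card + 1 = σ.card).card

/-- A set of simplices is acyclic (a forest) over `F_2` if no nonempty subset has
empty boundary. -/
def IsAcyclic (F : Finset (Finset ℕ)) : Prop :=
  ∀ Y ⊆ F, Y ≠ ∅ → bd Y ≠ ∅

/-- A `d`-hypertree on `V`: a maximal acyclic set of `d`-simplices on `V`. -/
def IsHypertreeOn (V : Finset ℕ) (d : ℕ) (T : Finset (Finset ℕ)) : Prop :=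
  T ⊆ simplices V d ∧ IsAcyclic T ∧
    ∀ G, T ⊆ G → G ⊆ simplices V d → IsAcyclic G → G = T

/-- A simple cycle over `F_2`: a nonempty set with empty boundary, no nonempty proper
subset of which has empty boundary. -/
def IsSimpleCycle (Z : Finset (Finset ℕ)) : Prop :=
  Z ≠ ∅ ∧ bd Z = ∅ ∧ ∀ Y ⊂ Z, Y ≠ ∅ → bd Y ≠ ∅

/-- Collapsibility: `X` can be reduced to `∅` by repeatedly removing a simplex `σ ∈ X`
containing a codimension-one face contained in no other current member of `X`. -/
inductive Collapsible : Finset (Finset ℕ) → Prop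
  | empty : Collapsible ∅
  | step (X : Finset (Finset ℕ)) (σ τ : Finset ℕ) (hσ : σ ∈ X) (hτ : τ ⊆ σ)
      (hcard : τ.card + 1 = σ.card) (huniq : ∀ σ' ∈ X, τ ⊆ σ' → σ' = σ)
      (h : Collapsible (X.erase σ)) : Collapsible X

/-- The cone over `X` with apex `v`. -/
def cone (v : ℕ) (X : Finset (Finset ℕ)) : Finset (Finset ℕ) :=
  X.image (insert v)

/-- The link of the vertex `v` in `X`. -/
def link (v : ℕ) (X : Finset (Finset ℕ)) : Finset (Finset ℕ) :=
  (X.filter fun σ => v ∈ σ).image fun σ => σ.erase v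

/-- `fill Z T`: the subset `F ⊆ T` with `∂F = Z` (when it exists; it is unique when `T`
is a hypertree and `Z` a cycle). -/
noncomputable def fill (Z T : Finset (Finset ℕ)) : Finset (Finset ℕ) :=
  if h : ∃ F, F ⊆ T ∧ bd F = Z then h.choose else ∅

/-- The average filling-volume `μ(T)` of a `d`-hypertree `T` on `[n]`. -/
noncomputable def fillVolAvg (n d : ℕ) (T : Finset (Finset ℕ)) : ℝ :=
  (∑ σ ∈ simplices (rng n) d, ((fill (bd {σ}) T).card : ℝ)) / (n.choose (d + 1) : ℝ)

open Classical in
/-- The cut of `τ` in `T`: the set of `d`-simplices `σ` on `[n]` such that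
`T ⊕ {τ} ⊕ {σ}` is a `d`-hypertree on `[n]`. -/
noncomputable def cut (n d : ℕ) (τ : Finset ℕ) (T : Finset (Finset ℕ)) : Finset (Finset ℕ) :=
  (simplices (rng n) d).filter fun σ => IsHypertreeOn (rng n) d ((T ∆ {τ}) ∆ {σ})

/-!
Fix `v, w ∈ Z` and let `v` be a leaf. If its neighbour is `u`, what remains is a tree on the other
vertices with odd-degree set `Z ∆ {v, u}`, again of even size. Every `u ≠ v, w` keeps `w` in this
set, so it stays nonempty, and distinct `u` give distinct trees. Hence passing from `n - 1` to `n`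
vertices multiplies the guaranteed number of trees by at least `n - 2`. Starting from a single edge
when `n = 2`, this gives `(n - 2)! ≥ n - 2` trees.
-/

lemma card_rng (n : ℕ) : (rng n).card = n := by simp [rng]

lemma even_card_symmDiff {α : Type*} [DecidableEq α] (s t : Finset α) :
    Even (s ∆ t).card ↔ (Even s.card ↔ Even t.card) := by
  have hcard : (s ∆ t).card = (s \ t).card + (t \ s).card :=
    card_union_of_disjoint disjoint_sdiff_sdiff
  have hs : (s \ t).card + (s ∩ t).card = s.card := card_sdiff_add_card_inter s t
  have ht : (t \ s).card + (s ∩ t).card = t.card := by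
    rw [inter_comm]
    exact card_sdiff_add_card_inter t s
  rw [hcard, ← hs, ← ht]
  grind

lemma mem_simplices {V σ : Finset ℕ} {d : ℕ} : σ ∈ simplices V d ↔ σ ⊆ V ∧ σ.card = d + 1 := by
  simp [simplices]

lemma simplices_mono {V W : Finset ℕ} (h : V ⊆ W) (d : ℕ) : simplices V d ⊆ simplices W d :=
  filter_subset_filter _ (powerset_mono.2 h)

lemma pair_mem_simplices {V : Finset ℕ} {u v : ℕ} (hu : u ∈ V) (hv : v ∈ V) (huv : u ≠ v) :
    {u, v} ∈ simplices V 1 :=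
  mem_simplices.2 ⟨by simp [insert_subset_iff, hu, hv], card_pair huv⟩

lemma mem_bd {X : Finset (Finset ℕ)} {τ : Finset ℕ} :
    τ ∈ bd X ↔ Odd (X.filter fun σ => τ ⊆ σ ∧ τ.card + 1 = σ.card).card := by
  refine mem_filter.trans (and_iff_right_of_imp fun hodd => ?_)
  obtain ⟨σ, hσ⟩ := card_pos.1 hodd.pos
  rw [mem_filter] at hσ
  exact mem_biUnion.2 ⟨σ, hσ.1, mem_powerset.2 hσ.2.1⟩

lemma mem_bd_singleton {σ τ : Finset ℕ} : τ ∈ bd {σ} ↔ τ ⊆ σ ∧ τ.card + 1 = σ.card := by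
  rw [mem_bd, filter_singleton]
  split_ifs with h <;> simp [h]

lemma bd_symmDiff (X Y : Finset (Finset ℕ)) : bd (X ∆ Y) = bd X ∆ bd Y := by
  ext τ
  have hfilter (p : Finset ℕ → Prop) [DecidablePred p] :
      (X ∆ Y).filter p = X.filter p ∆ Y.filter p := by
    ext σ
    simp only [mem_filter, mem_symmDiff]
    tauto
  simp only [mem_symmDiff, mem_bd, hfilter, ← Nat.not_even_iff_odd, even_card_symmDiff]
  tauto

lemma bd_insert {X : Finset (Finset ℕ)} {σ : Finset ℕ} (hσ : σ ∉ X) :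
    bd (insert σ X) = bd X ∆ bd {σ} := by
  rw [← bd_symmDiff, symmDiff_eq_union (disjoint_singleton_right.2 hσ), union_comm, insert_eq]

lemma bd_singleton_pair {u v : ℕ} (huv : u ≠ v) :
    bd {{u, v}} = ({u, v} : Finset ℕ).image fun x => {x} := by
  ext τ
  simp only [mem_bd_singleton, card_pair huv, Nat.reduceEqDiff, mem_image]
  constructor
  · rintro ⟨hτ, hcard⟩
    obtain ⟨x, rfl⟩ := card_eq_one.1 hcard
    exact ⟨x, singleton_subset_iff.1 hτ, rfl⟩
  · rintro ⟨x, hx, rfl⟩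
    exact ⟨singleton_subset_iff.2 hx, card_singleton x⟩

lemma isAcyclic_empty : IsAcyclic ∅ := fun _ hY hne => absurd (subset_empty.1 hY) hne

lemma IsAcyclic.insert_of_freeFace {X : Finset (Finset ℕ)} {σ τ : Finset ℕ} (hX : IsAcyclic X)
    (hτ : τ ∈ bd {σ}) (hfree : ∀ ρ ∈ X, ¬τ ⊆ ρ) : IsAcyclic (insert σ X) := by
  intro Y hY hne
  by_cases hσ : σ ∈ Y
  · refine ne_empty_of_mem (a := τ) (mem_bd.2 ?_)
    have hfilter : (Y.filter fun ρ => τ ⊆ ρ ∧ τ.card + 1 = ρ.card) = {σ} := by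
      refine eq_singleton_iff_unique_mem.2 ⟨mem_filter.2 ⟨hσ, mem_bd_singleton.1 hτ⟩, ?_⟩
      intro ρ hρ
      rw [mem_filter] at hρ
      exact (mem_insert.1 (hY hρ.1)).resolve_right fun hρX => hfree ρ hρX hρ.2.1
    simp [hfilter]
  · exact hX Y ((subset_insert_iff_of_notMem hσ).1 hY) hne

open Classical in
/-- The spanning trees of the complete graph on `V`, encoded as acyclic sets of `|V| - 1` edges,
whose set of odd-degree vertices is `Z`. By truncated subtraction, `∅` is a tree on no vertices. -/
noncomputable def treesWithOddSet (V Z : Finset ℕ) : Finset (Finset (Finset ℕ)) :=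
  (simplices V 1).powerset.filter fun T =>
    IsAcyclic T ∧ T.card = V.card - 1 ∧ bd T = Z.image fun v => {v}

section treesWithOddSet

variable {V Z : Finset ℕ} {T : Finset (Finset ℕ)} {u v : ℕ}

lemma mem_treesWithOddSet :
    T ∈ treesWithOddSet V Z ↔ T ⊆ simplices V 1 ∧ IsAcyclic T ∧ T.card = V.card - 1 ∧
      bd T = Z.image fun v => {v} := by
  simp [treesWithOddSet]

lemma notMem_of_mem_treesWithOddSet (hT : T ∈ treesWithOddSet V Z) (hv : v ∉ V) :
    ∀ σ ∈ T, v ∉ σ :=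
  fun _ hσ hvσ => hv ((mem_simplices.1 ((mem_treesWithOddSet.1 hT).1 hσ)).1 hvσ)

lemma pair_notMem_of_mem_treesWithOddSet (hT : T ∈ treesWithOddSet V Z) (hv : v ∉ V) :
    {v, u} ∉ T :=
  fun h => notMem_of_mem_treesWithOddSet hT hv _ h (mem_insert_self v {u})

lemma empty_mem_treesWithOddSet_singleton : ∅ ∈ treesWithOddSet {v} ∅ :=
  mem_treesWithOddSet.2 ⟨empty_subset _, isAcyclic_empty, rfl, rfl⟩

lemma insert_pair_mem_treesWithOddSet (hv : v ∉ V) (hu : u ∈ V)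
    (hT : T ∈ treesWithOddSet V (Z ∆ {v, u})) :
    insert {v, u} T ∈ treesWithOddSet (insert v V) Z := by
  have hvu : v ≠ u := (ne_of_mem_of_not_mem hu hv).symm
  have hvT := notMem_of_mem_treesWithOddSet hT hv
  have hpair : {v, u} ∉ T := pair_notMem_of_mem_treesWithOddSet hT hv
  obtain ⟨hsub, hacyclic, hcard, hbd⟩ := mem_treesWithOddSet.1 hT
  refine mem_treesWithOddSet.2 ⟨insert_subset ?_ ?_, ?_, ?_, ?_⟩
  · exact pair_mem_simplices (mem_insert_self v V) (mem_insert_of_mem hu) hvu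
  · exact hsub.trans (simplices_mono (subset_insert v V) 1)
  · have hface : {v} ∈ bd {{v, u}} := by simp [mem_bd_singleton, card_pair hvu]
    exact hacyclic.insert_of_freeFace hface fun σ hσ => mt singleton_subset_iff.1 (hvT σ hσ)
  · have hV : 0 < V.card := card_pos.2 ⟨u, hu⟩
    rw [card_insert_of_notMem hpair, card_insert_of_notMem hv]
    omega
  · rw [bd_insert hpair, hbd, bd_singleton_pair hvu, ← image_symmDiff _ _ singleton_injective,
      symmDiff_symmDiff_cancel_right]

lemma sum_card_treesWithOddSet_le (hv : v ∉ V) (Z : Finset ℕ) :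
    ∑ u ∈ V, (treesWithOddSet V (Z ∆ {v, u})).card ≤ (treesWithOddSet (insert v V) Z).card := by
  rw [← card_sigma]
  refine card_le_card_of_injOn (fun p => insert {v, p.1} p.2) ?_ ?_
  · rintro ⟨u, T⟩ hp
    obtain ⟨hu, hT⟩ := mem_sigma.1 hp
    exact insert_pair_mem_treesWithOddSet hv hu hT
  · rintro ⟨u, T⟩ hp ⟨u', T'⟩ hp' (heq : insert {v, u} T = insert {v, u'} T')
    obtain ⟨hu, hT⟩ : u ∈ V ∧ T ∈ treesWithOddSet V (Z ∆ {v, u}) := mem_sigma.1 hp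
    have hT' : T' ∈ treesWithOddSet V (Z ∆ {v, u'}) := (mem_sigma.1 hp').2
    obtain rfl : u = u' := by
      have hpair : {v, u} = ({v, u'} : Finset ℕ) :=
        (mem_insert.1 (heq ▸ mem_insert_self {v, u} T)).resolve_right
          (pair_notMem_of_mem_treesWithOddSet hT' hv)
      have huu' : u ∈ ({v, u'} : Finset ℕ) := hpair ▸ by simp
      simpa [ne_of_mem_of_not_mem hu hv] using huu'
    obtain rfl : T = T' := by
      rw [← erase_insert (pair_notMem_of_mem_treesWithOddSet hT hv), heq,
        erase_insert (pair_notMem_of_mem_treesWithOddSet hT' hv)]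
    rfl

lemma treesWithOddSet_pair_nonempty (huv : u ≠ v) : (treesWithOddSet {u, v} {u, v}).Nonempty := by
  refine ⟨_, insert_pair_mem_treesWithOddSet (T := ∅) (notMem_singleton.2 huv)
    (mem_singleton_self v) ?_⟩
  rw [symmDiff_self]
  exact empty_mem_treesWithOddSet_singleton

lemma card_sub_two_mul_le_card_treesWithOddSet {w m : ℕ} (hv : v ∈ V) (hw : w ∈ V) (hvw : v ≠ w)
    (hm : ∀ u ∈ (V.erase v).erase w, m ≤ (treesWithOddSet (V.erase v) (Z ∆ {v, u})).card) :
    (V.card - 2) * m ≤ (treesWithOddSet V Z).card := by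
  have hcard : ((V.erase v).erase w).card = V.card - 2 := by
    rw [card_erase_of_mem (mem_erase.2 ⟨hvw.symm, hw⟩), card_erase_of_mem hv, Nat.sub_sub]
  calc (V.card - 2) * m
      = ((V.erase v).erase w).card * m := by rw [hcard]
    _ ≤ ∑ u ∈ (V.erase v).erase w, (treesWithOddSet (V.erase v) (Z ∆ {v, u})).card :=
        card_nsmul_le_sum _ _ _ hm
    _ ≤ ∑ u ∈ V.erase v, (treesWithOddSet (V.erase v) (Z ∆ {v, u})).card :=
        sum_le_sum_of_subset (erase_subset w _)
    _ ≤ (treesWithOddSet (insert v (V.erase v)) Z).card :=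
        sum_card_treesWithOddSet_le (notMem_erase v V) Z
    _ = (treesWithOddSet V Z).card := by rw [insert_erase hv]

lemma factorial_le_card_treesWithOddSet (hZV : Z ⊆ V) (hZ : Z.Nonempty) (hZeven : Even Z.card) :
    (V.card - 2).factorial ≤ (treesWithOddSet V Z).card := by
  induction hk : V.card - 2 generalizing V Z with
  | zero =>
    have hZcard : 1 < Z.card := Nat.one_lt_of_ne_zero_of_even hZ.card_ne_zero hZeven
    obtain rfl : Z = V := eq_of_subset_of_card_le hZV (by omega)
    obtain ⟨v, w, hvw, rfl⟩ := card_eq_two.1 (show Z.card = 2 by omega)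
    exact card_pos.2 (treesWithOddSet_pair_nonempty hvw)
  | succ k ih =>
    obtain ⟨v, hv, w, hw, hvw⟩ :=
      one_lt_card.1 (Nat.one_lt_of_ne_zero_of_even hZ.card_ne_zero hZeven)
    rw [Nat.factorial_succ, ← hk]
    refine card_sub_two_mul_le_card_treesWithOddSet (hZV hv) (hZV hw) hvw fun u hu => ?_
    simp only [mem_erase] at hu
    obtain ⟨huw, huv, huV⟩ := hu
    have hsub : Z ∆ {v, u} ⊆ V.erase v := by grind [mem_symmDiff]
    have hw' : w ∈ Z ∆ {v, u} := by grind [mem_symmDiff]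
    have heven : Even (Z ∆ {v, u}).card := by
      simp [even_card_symmDiff, hZeven, card_pair huv.symm]
    have hcard : (V.erase v).card - 2 = k := by
      rw [card_erase_of_mem (hZV hv)]
      omega
    exact ih hsub ⟨w, hw'⟩ heven hcard

end treesWithOddSet

theorem exists_many_trees_with_odd_degree_set_general (V Z : Finset ℕ) (hZ : Z ⊆ V)
    (hZne : Z.Nonempty) (hZeven : Even Z.card) :
    ∃ S : Finset (Finset (Finset ℕ)), (V.card - 2).factorial ≤ S.card ∧
      ∀ T ∈ S, T ⊆ simplices V 1 ∧ IsAcyclic T ∧ T.card = V.card - 1 ∧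
        bd T = Z.image fun v => {v} :=
  ⟨treesWithOddSet V Z, factorial_le_card_treesWithOddSet hZ hZne hZeven,
    fun _ => mem_treesWithOddSet.1⟩

/-- For `n ≥ 2` and a nonempty `Z ⊆ [n]` of even cardinality, there are at least `n − 2`
distinct spanning trees of the complete graph on `[n]` (acyclic sets of `n − 1` edges)
whose set of odd-degree vertices is exactly `Z`. -/
theorem exists_many_trees_with_odd_degree_set (n : ℕ) (hn : 2 ≤ n) (Z : Finset ℕ)
    (hZ : Z ⊆ rng n) (hZne : Z ≠ ∅) (hZeven : Even Z.card) :
    ∃ S : Finset (Finset (Finset ℕ)), n - 2 ≤ S.card ∧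
      ∀ T ∈ S, T ⊆ simplices (rng n) 1 ∧ IsAcyclic T ∧ T.card = n - 1 ∧
        bd T = Z.image fun v => {v} := by
  obtain ⟨S, hS, hT⟩ := exists_many_trees_with_odd_degree_set_general (rng n) Z hZ
    (nonempty_iff_ne_empty.2 hZne) hZeven
  rw [card_rng] at hS hT
  exact ⟨S, (Nat.self_le_factorial _).trans hS, hT⟩
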